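/- The eigenvalues of the Laplacian ∇_A^* ∇_A of the SO(3)-invariant connection m A₀ on the line bundle H^m over S² (H the Hopf line bundle, A₀ the invariant connection with harmonic curvature) are (l(l+2) − m²)/4 for l = |m| + 2j, j = 0, 1, 2, …, each with multiplicity l + 1. -/

import Mathlib

/-!
A section of `H ^ m` is a weight-`m` function on `S³`, and `Δ` of its `0`-homogeneous extension is
its spherical Laplacian. Hence, if `c` is its `Δ_{S³}`-eigenvalue, Green's identity on `S³` shows
that its moments `M p` against polynomials `p` of degree `d` satisfy
`(d (d + 2) - c) M p = M (Δ p)`, while invariance under the circle action kills the moments against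
polynomials whose weight is not `-m`. If `c` is not of the form `l (l + 2)` with `l = |m| + 2j`, all
moments vanish by induction on the degree, and the section is zero by Stone-Weierstrass. If
`c = l (l + 2)`, the moments are determined by those of degree `l` and weight `-m`, and the relation
`|z₁|² + |z₂|² = 1` leaves only `l + 1` of these.

Conversely, with `A + B = l` and `A - B = m`, the polynomials `(z₁ + t z̄₂)ᴬ (z₂ - t z̄₁)ᴮ` are
harmonic, and they are linearly independent for `l + 1` values of `t` by Vandermonde.
-/

noncomputable section

open scoped BigOperators

abbrev E4 := EuclideanSpace ℝ (Fin 4)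

/-- The circle action `e^{is}·(z₁, z₂) = (e^{is} z₁, e^{−is} z₂)` on `ℂ² = ℝ⁴`,
`z₁ = x₀ + i x₁`, `z₂ = x₂ + i x₃`; the Hopf fibration `S³ → S²` is its restriction to
the unit sphere. -/
def hopfAct (s : ℝ) (x : E4) : E4 :=
  (WithLp.equiv 2 (Fin 4 → ℝ)).symm
    ![Real.cos s * x 0 - Real.sin s * x 1,
      Real.sin s * x 0 + Real.cos s * x 1,
      Real.cos s * x 2 + Real.sin s * x 3,
      -Real.sin s * x 2 + Real.cos s * x 3]

/-- The flat Laplacian (sum of second derivatives) on ℝ⁴, for ℂ-valued functions. -/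
def lap4 (f : E4 → ℂ) (x : E4) : ℂ :=
  ∑ i : Fin 4,
    fderiv ℝ (fun y => fderiv ℝ f y (EuclideanSpace.single i 1)) x
      (EuclideanSpace.single i 1)

/-- Smooth sections of the line bundle `H^m` over the unit round `S²` (`H` the Hopf,
i.e. degree-1, line bundle) are exactly the weight-`m` equivariant functions on the unit
sphere `S³ ⊂ ℂ²`, extended 0-homogeneously to `ℝ⁴ \ {0}`.  On such functions the rough
Laplacian `∇_A^*∇_A` of the SO(3)-invariant connection `m A₀` (with harmonic curvature
`(i/2) m dv_{S²}`) is the horizontal Laplacian `(1/4)(Δ_{S³} − m²)`, where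
`Δ_{S³} f = −(Σᵢ ∂ᵢ² f)|_{S³}` for the 0-homogeneous extension.
`IsEigenSection m μ f` states that `f` represents an eigensection of `∇_A^*∇_A` on `H^m`
with eigenvalue `μ`. -/
def IsEigenSection (m : ℤ) (μ : ℝ) (f : E4 → ℂ) : Prop :=
  ContDiffOn ℝ (⊤ : ℕ∞) f {x : E4 | x ≠ 0} ∧
  (∀ c : ℝ, 0 < c → ∀ x : E4, f (c • x) = f x) ∧
  (∀ (s : ℝ) (x : E4), f (hopfAct s x) = Complex.exp (Complex.I * (m : ℂ) * (s : ℂ)) * f x) ∧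
  (∀ x : E4, ‖x‖ = 1 → (1 / 4 : ℂ) * (-(lap4 f x) - (m : ℂ) ^ 2 * f x) = (μ : ℂ) * f x)

section

open Filter Laplacian Metric MeasureTheory Module MvPolynomial Set Topology
open scoped ContDiff RealInnerProductSpace

section Laplacian

variable {E F ι : Type*} [NormedAddCommGroup E] [InnerProductSpace ℝ E] [NormedAddCommGroup F]
  [NormedSpace ℝ F] {f : E → F} {x : E}

theorem hasFDerivAt_comp_norm_sq {φ : ℝ → ℝ} {φ' : ℝ} (hφ : HasDerivAt φ φ' (‖x‖ ^ 2)) :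
    HasFDerivAt (fun y : E => φ (‖y‖ ^ 2)) ((2 * φ') • innerSL ℝ x) x := by
  convert! hφ.comp_hasFDerivAt x (hasStrictFDerivAt_norm_sq x).hasFDerivAt using 1
  module

theorem contDiffAt_comp_norm_sq {φ : ℝ → ℝ} {n : WithTop ℕ∞} (hφ : ContDiffAt ℝ n φ (‖x‖ ^ 2)) :
    ContDiffAt ℝ n (fun y : E => φ (‖y‖ ^ 2)) x :=
  hφ.comp x (contDiff_norm_sq ℝ).contDiffAt

variable [FiniteDimensional ℝ E] [Fintype ι]

theorem laplacian_eq_sum_fderiv_fderiv (b : OrthonormalBasis ι ℝ E) (hf : ContDiffAt ℝ 2 f x) :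
    Δ f x = ∑ i, fderiv ℝ (fun y => fderiv ℝ f y (b i)) x (b i) := by
  have hf' : DifferentiableAt ℝ (fderiv ℝ f) x :=
    (hf.fderiv_right (m := 1) (by norm_num)).differentiableAt one_ne_zero
  simp [InnerProductSpace.laplacian_eq_iteratedFDeriv_orthonormalBasis f b,
    iteratedFDeriv_two_apply, fderiv_clm_apply hf' (differentiableAt_const _)]

theorem laplacian_smul_fun (b : OrthonormalBasis ι ℝ E) {χ : E → ℝ} (hχ : ContDiffAt ℝ 2 χ x)
    (hf : ContDiffAt ℝ 2 f x) :
    Δ (fun y => χ y • f y) x =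
      χ x • Δ f x + (2 : ℝ) • ∑ i, fderiv ℝ χ x (b i) • fderiv ℝ f x (b i) + Δ χ x • f x := by
  have hχ' (v : E) : DifferentiableAt ℝ (fun y => fderiv ℝ χ y v) x :=
    ((hχ.fderiv_right (m := 1) (by norm_num)).differentiableAt one_ne_zero).clm_apply
      (differentiableAt_const v)
  have hf' (v : E) : DifferentiableAt ℝ (fun y => fderiv ℝ f y v) x :=
    ((hf.fderiv_right (m := 1) (by norm_num)).differentiableAt one_ne_zero).clm_apply
      (differentiableAt_const v)
  have hfirst (v : E) : (fun y => fderiv ℝ (fun y => χ y • f y) y v) =ᶠ[𝓝 x]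
      fun y => χ y • fderiv ℝ f y v + fderiv ℝ χ y v • f y := by
    filter_upwards [hχ.eventually (by simp), hf.eventually (by simp)] with y hχy hfy
    simp [fderiv_fun_smul (hχy.differentiableAt two_ne_zero) (hfy.differentiableAt two_ne_zero)]
  have hsecond (v : E) : fderiv ℝ (fun y => fderiv ℝ (fun y => χ y • f y) y v) x v =
      χ x • fderiv ℝ (fun y => fderiv ℝ f y v) x v + (2 : ℝ) • fderiv ℝ χ x v • fderiv ℝ f x v +
        fderiv ℝ (fun y => fderiv ℝ χ y v) x v • f x := by
    have hχx := hχ.differentiableAt two_ne_zero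
    have hfx := hf.differentiableAt two_ne_zero
    rw [(hfirst v).fderiv_eq, fderiv_fun_add (hχx.fun_smul (hf' v)) ((hχ' v).fun_smul hfx),
      fderiv_fun_smul hχx (hf' v), fderiv_fun_smul (hχ' v) hfx]
    simp only [add_apply, smul_apply, ContinuousLinearMap.smulRight_apply]
    module
  have hχf : ContDiffAt ℝ 2 (fun y => χ y • f y) x := hχ.smul hf
  simp only [laplacian_eq_sum_fderiv_fderiv b hχf, laplacian_eq_sum_fderiv_fderiv b hχ,
    laplacian_eq_sum_fderiv_fderiv b hf, hsecond, Finset.sum_add_distrib, Finset.smul_sum,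
    Finset.sum_smul]

theorem laplacian_comp_norm_sq {φ : ℝ → ℝ} (hφ : ContDiffAt ℝ 2 φ (‖x‖ ^ 2)) :
    Δ (fun y : E => φ (‖y‖ ^ 2)) x =
      2 * finrank ℝ E * deriv φ (‖x‖ ^ 2) + 4 * ‖x‖ ^ 2 * deriv (deriv φ) (‖x‖ ^ 2) := by
  have hφ' : HasDerivAt (deriv φ) (deriv (deriv φ) (‖x‖ ^ 2)) (‖x‖ ^ 2) :=
    ((hφ.derivWithin (m := 1) (by norm_num)).differentiableAt one_ne_zero).hasDerivAt
  have hfirst (v : E) : (fun y => fderiv ℝ (fun y : E => φ (‖y‖ ^ 2)) y v) =ᶠ[𝓝 x]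
      fun y => (2 * deriv φ (‖y‖ ^ 2)) * ⟪y, v⟫ := by
    filter_upwards [((contDiff_norm_sq ℝ (n := 0)).continuous.tendsto x).eventually
      (hφ.eventually (by simp))] with y hy
    simp [(hasFDerivAt_comp_norm_sq (hy.differentiableAt two_ne_zero).hasDerivAt).fderiv]
  have hsecond (v : E) :
      fderiv ℝ (fun y => fderiv ℝ (fun y : E => φ (‖y‖ ^ 2)) y v) x v =
        2 * deriv φ (‖x‖ ^ 2) * ‖v‖ ^ 2 + 4 * deriv (deriv φ) (‖x‖ ^ 2) * ⟪x, v⟫ ^ 2 := by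
    have hprod : HasFDerivAt (fun y => (2 * deriv φ (‖y‖ ^ 2)) * ⟪y, v⟫) _ x :=
      ((hasFDerivAt_comp_norm_sq hφ').const_mul 2).fun_mul
        ((hasFDerivAt_id x).inner ℝ (hasFDerivAt_const v x))
    rw [(hfirst v).fderiv_eq, hprod.fderiv]
    simp only [id_eq, add_apply, smul_apply, ContinuousLinearMap.comp_apply,
      ContinuousLinearMap.prod_apply, ContinuousLinearMap.id_apply, zero_apply,
      fderivInnerCLM_apply, inner_zero_right, real_inner_self_eq_norm_sq, zero_add, smul_eq_mul,
      coe_innerSL_apply]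
    ring
  simp only [laplacian_eq_sum_fderiv_fderiv (stdOrthonormalBasis ℝ E) (contDiffAt_comp_norm_sq hφ),
    hsecond, Finset.sum_add_distrib, ← Finset.mul_sum, OrthonormalBasis.sum_sq_inner_left,
    OrthonormalBasis.norm_eq_one, one_pow, Finset.sum_const, Finset.card_univ, Fintype.card_fin,
    nsmul_eq_mul, mul_one]
  ring

theorem laplacian_comp_norm_sq_smul {φ : ℝ → ℝ} {d : ℝ} (hφ : ContDiffAt ℝ 2 φ (‖x‖ ^ 2))
    (hf : ContDiffAt ℝ 2 f x) (hd : fderiv ℝ f x x = d • f x) :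
    Δ (fun y => φ (‖y‖ ^ 2) • f y) x = φ (‖x‖ ^ 2) • Δ f x +
      ((4 * d + 2 * finrank ℝ E) * deriv φ (‖x‖ ^ 2) +
        4 * ‖x‖ ^ 2 * deriv (deriv φ) (‖x‖ ^ 2)) • f x := by
  let b := stdOrthonormalBasis ℝ E
  have hφ₁ : HasDerivAt φ (deriv φ (‖x‖ ^ 2)) (‖x‖ ^ 2) :=
    (hφ.differentiableAt two_ne_zero).hasDerivAt
  have hcross : ∑ i, ⟪x, b i⟫ • fderiv ℝ f x (b i) = d • f x := by
    rw [← hd]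
    conv_rhs => arg 2; rw [← b.sum_repr' x]
    simp only [map_sum, map_smul, real_inner_comm x]
  rw [laplacian_smul_fun b (contDiffAt_comp_norm_sq hφ) hf, laplacian_comp_norm_sq hφ,
    (hasFDerivAt_comp_norm_sq hφ₁).fderiv]
  simp only [smul_apply, innerSL_apply_apply, smul_assoc, ← Finset.smul_sum, hcross]
  module

end Laplacian

section Homogeneous

variable {E F : Type*} [NormedAddCommGroup E] [NormedSpace ℝ E] [NormedAddCommGroup F]
  [NormedSpace ℝ F] {f : E → F} {x : E}

theorem fderiv_apply_self_of_homogeneous {d : ℕ} (hf : DifferentiableAt ℝ f x)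
    (hd : ∀ c : ℝ, 0 < c → f (c • x) = c ^ d • f x) : fderiv ℝ f x x = (d : ℝ) • f x := by
  have hray : HasDerivAt (fun c : ℝ => c • x) x 1 := by
    simpa using (hasDerivAt_id (1 : ℝ)).smul_const x
  have hcomp : HasDerivAt (fun c : ℝ => f (c • x)) (fderiv ℝ f x x) 1 :=
    HasFDerivAt.comp_hasDerivAt 1 (by simpa using hf.hasFDerivAt) hray
  have hpow : HasDerivAt (fun c : ℝ => c ^ d • f x) ((d : ℝ) • f x) 1 := by
    simpa using (hasDerivAt_pow d (1 : ℝ)).smul_const (f x)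
  refine hcomp.unique (hpow.congr_of_eventuallyEq ?_)
  filter_upwards [lt_mem_nhds one_pos] with c hc using hd c hc

/-- Smooth functions on the unit sphere of `E`, encoded by their `0`-homogeneous extensions to `E`.
For such `f`, the restriction of `Δ f` to the sphere is the spherical Laplacian. -/
structure IsSmoothOnSphere (f : E → F) : Prop where
  contDiffOn : ContDiffOn ℝ ∞ f {x | x ≠ 0}
  map_smul : ∀ c : ℝ, 0 < c → ∀ x, f (c • x) = f x

namespace IsSmoothOnSphere

theorem contDiffAt (hf : IsSmoothOnSphere f) (hx : x ≠ 0) : ContDiffAt ℝ ∞ f x :=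
  hf.contDiffOn.contDiffAt (isOpen_ne.mem_nhds hx)

theorem apply_normalize (hf : IsSmoothOnSphere f) (hx : x ≠ 0) : f (‖x‖⁻¹ • x) = f x :=
  hf.map_smul _ (by positivity) x

theorem fderiv_apply_self (hf : IsSmoothOnSphere f) (hx : x ≠ 0) : fderiv ℝ f x x = 0 := by
  simpa using fderiv_apply_self_of_homogeneous (d := 0)
    ((hf.contDiffAt hx).differentiableAt (by simp)) (by simpa using fun c hc => hf.map_smul c hc x)

end IsSmoothOnSphere

end Homogeneous

section HomogeneousLaplacian

variable {E F : Type*} [NormedAddCommGroup E] [InnerProductSpace ℝ E] [FiniteDimensional ℝ E]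
  [NormedAddCommGroup F] [NormedSpace ℝ F] {f : E → F} {x : E}

theorem laplacian_comp_const_smul (c : ℝ) :
    Δ (fun y => f (c • y)) x = c ^ 2 • Δ f (c • x) := by
  have hfirst : fderiv ℝ (fun y => f (c • y)) = fun y => c • fderiv ℝ f (c • y) :=
    funext fun _ => fderiv_comp_smul c
  have hsecond : fderiv ℝ (fun y => c • fderiv ℝ f (c • y)) x =
      c ^ 2 • fderiv ℝ (fderiv ℝ f) (c • x) := by
    refine (congrFun (fderiv_const_smul_field (f := fun y => fderiv ℝ f (c • y)) c) x).trans ?_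
    rw [Pi.smul_apply, fderiv_comp_smul, smul_smul, sq]
  simp [InnerProductSpace.laplacian_eq_iteratedFDeriv_stdOrthonormalBasis,
    iteratedFDeriv_two_apply, hfirst, hsecond, Finset.smul_sum]

namespace IsSmoothOnSphere

theorem laplacian_normalize (hf : IsSmoothOnSphere f) (hx : x ≠ 0) :
    Δ f x = (‖x‖⁻¹ ^ 2) • Δ f (‖x‖⁻¹ • x) := by
  rw [← laplacian_comp_const_smul, show (fun y => f (‖x‖⁻¹ • y)) = f from
    funext (hf.map_smul _ (by positivity))]

theorem laplacian_comp_norm_sq_smul (hf : IsSmoothOnSphere f) (hx : x ≠ 0) {φ : ℝ → ℝ}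
    (hφ : ContDiffAt ℝ 2 φ (‖x‖ ^ 2)) :
    Δ (fun y => φ (‖y‖ ^ 2) • f y) x =
      φ (‖x‖ ^ 2) • Δ f x + Δ (fun y : E => φ (‖y‖ ^ 2)) x • f x := by
  rw [_root_.laplacian_comp_norm_sq_smul (d := 0) hφ ((hf.contDiffAt hx).of_le ENat.LEInfty.out)
    (by rw [hf.fderiv_apply_self hx, zero_smul]), laplacian_comp_norm_sq hφ]
  simp

end IsSmoothOnSphere

end HomogeneousLaplacian

section SphereMeasure

variable {E F : Type*} [NormedAddCommGroup E] [NormedSpace ℝ E] [FiniteDimensional ℝ E]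
  [MeasurableSpace E] [BorelSpace E] [Nontrivial E] [NormedAddCommGroup F] [NormedSpace ℝ F]
  (μ : Measure E) [μ.IsAddHaarMeasure]

theorem integral_norm_smul_normalize (w : ℝ → ℝ) (H : E → F) :
    ∫ x, w ‖x‖ • H (‖x‖⁻¹ • x) ∂μ =
      (∫ r : Ioi (0 : ℝ), w r ∂.volumeIoiPow (finrank ℝ E - 1)) •
        ∫ x : sphere (0 : E) 1, H x ∂μ.toSphere := by
  calc ∫ x, w ‖x‖ • H (‖x‖⁻¹ • x) ∂μ
      = ∫ x : ({0}ᶜ : Set E), w ‖x.1‖ • H (‖x.1‖⁻¹ • x.1) ∂μ.comap (↑) := by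
        rw [integral_subtype_comap (measurableSet_singleton _).compl
          fun x => w ‖x‖ • H (‖x‖⁻¹ • x), restrict_compl_singleton]
    _ = ∫ p : sphere (0 : E) 1 × Ioi (0 : ℝ), w p.2 • H p.1
          ∂μ.toSphere.prod (.volumeIoiPow (finrank ℝ E - 1)) := by
        simpa using μ.measurePreserving_homeomorphUnitSphereProd.integral_comp
          (Homeomorph.measurableEmbedding _)
          fun p : sphere (0 : E) 1 × Ioi (0 : ℝ) => w p.2 • H p.1
    _ = _ := by
        rw [← integral_prod_swap]
        exact integral_prod_smul (fun r : Ioi (0 : ℝ) => w r) fun x : sphere (0 : E) 1 => H x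

theorem integral_volumeIoiPow_pos {w : ℝ → ℝ} (hw : Continuous fun x : E => w ‖x‖)
    (hsupp : HasCompactSupport fun x : E => w ‖x‖) (hw₀ : ∀ r, 0 ≤ w r) (hw₁ : w 1 ≠ 0) :
    0 < ∫ r : Ioi (0 : ℝ), w r ∂.volumeIoiPow (finrank ℝ E - 1) := by
  let μ : Measure E := Measure.addHaar
  obtain ⟨x, hx⟩ := exists_norm_eq E zero_le_one
  have hpos : 0 < ∫ x, w ‖x‖ ∂μ :=
    hw.integral_pos_of_hasCompactSupport_nonneg_nonzero hsupp (fun _ => hw₀ _) (x := x)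
      (by rwa [hx])
  have hpolar := integral_norm_smul_normalize μ w fun _ => (1 : ℝ)
  simp only [smul_eq_mul, mul_one, integral_const] at hpolar
  exact pos_of_mul_pos_left (hpolar ▸ hpos) measureReal_nonneg

end SphereMeasure

section Cutoff

/-- A bump around `1`; composed with `‖x‖ ^ 2` it localises to an annulus around the sphere. -/
def annulusBump : ContDiffBump (1 : ℝ) := ⟨1 / 4, 1 / 2, by norm_num, by norm_num⟩

theorem annulusBump_eq_zero {t : ℝ} (ht : t < 1 / 2 ∨ 2 ≤ t) : annulusBump t = 0 := by
  refine annulusBump.zero_of_le_dist ?_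
  change 1 / 2 ≤ |t - 1|
  rw [le_abs]
  rcases ht with ht | ht
  · right; linarith
  · left; linarith

theorem annulusBump_one : annulusBump 1 = 1 :=
  annulusBump.one_of_mem_closedBall (mem_closedBall_self annulusBump.rIn_pos.le)

variable {E F : Type*} [NormedAddCommGroup E] [InnerProductSpace ℝ E] [NormedAddCommGroup F]
  [NormedSpace ℝ F]

theorem contDiff_annulusBump_smul {n : ℕ∞} {h : E → F} (hh : ContDiffOn ℝ n h {x | x ≠ 0}) :
    ContDiff ℝ n fun x => annulusBump (‖x‖ ^ 2) • h x := by
  refine contDiff_iff_contDiffAt.2 fun x => ?_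
  rcases eq_or_ne x 0 with rfl | hx
  · refine contDiffAt_const (c := (0 : F)) |>.congr_of_eventuallyEq ?_
    filter_upwards [(isOpen_lt (contDiff_norm_sq ℝ (n := 0)).continuous continuous_const).mem_nhds
      (show ‖(0 : E)‖ ^ 2 < 1 / 2 by simp)] with y hy
    rw [annulusBump_eq_zero (.inl hy), zero_smul]
  · exact (annulusBump.contDiff.comp (contDiff_norm_sq ℝ)).contDiffAt.smul
      (hh.contDiffAt (isOpen_ne.mem_nhds hx))

theorem hasCompactSupport_annulusBump_smul [FiniteDimensional ℝ E] (h : E → F) :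
    HasCompactSupport fun x => annulusBump (‖x‖ ^ 2) • h x := by
  refine .intro (isCompact_closedBall (0 : E) 2) fun x hx => ?_
  have hx' : 2 < ‖x‖ := by simpa using hx
  rw [annulusBump_eq_zero (.inr (by nlinarith)), zero_smul]

end Cutoff

section Green

variable {E 𝕜 : Type*} [NormedAddCommGroup E] [InnerProductSpace ℝ E] [FiniteDimensional ℝ E]
  [MeasurableSpace E] [BorelSpace E] [RCLike 𝕜] (μ : Measure E) [μ.IsAddHaarMeasure] {f g : E → 𝕜}

namespace IsSmoothOnSphere

theorem integral_annulus_wronskian (hf : IsSmoothOnSphere f) (hg : IsSmoothOnSphere g) :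
    ∫ x, annulusBump (‖x‖ ^ 2) ^ 2 • (f x * Δ g x - Δ f x * g x) ∂μ = 0 := by
  let F := (hasCompactSupport_annulusBump_smul f).toSchwartzMap
    (contDiff_annulusBump_smul hf.contDiffOn)
  let G := (hasCompactSupport_annulusBump_smul g).toSchwartzMap
    (contDiff_annulusBump_smul hg.contDiffOn)
  have hgreen : ∫ x, (F x * Δ G x - Δ F x * G x) ∂μ = 0 := by
    have hint (F G : SchwartzMap E 𝕜) : Integrable (fun x => F x * G x) μ :=
      (SchwartzMap.pairing (ContinuousLinearMap.mul ℝ 𝕜) F G).integrable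
    rw [integral_sub (hint F (Δ G)) (hint (Δ F) G),
      SchwartzMap.integral_mul_laplacian_right_eq_left, sub_self]
  rw [← hgreen]
  refine integral_congr_ae (.of_forall fun x => ?_)
  have hF : F x = annulusBump (‖x‖ ^ 2) • f x := rfl
  have hG : G x = annulusBump (‖x‖ ^ 2) • g x := rfl
  rcases eq_or_ne x 0 with rfl | hx
  · simp [hF, hG, annulusBump_eq_zero]
  have hΔF : Δ F x = _ := (SchwartzMap.laplacian_apply F x).trans
    (hf.laplacian_comp_norm_sq_smul hx annulusBump.contDiffAt)
  have hΔG : Δ G x = _ := (SchwartzMap.laplacian_apply G x).trans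
    (hg.laplacian_comp_norm_sq_smul hx annulusBump.contDiffAt)
  simp only [hF, hG, hΔF, hΔG, RCLike.real_smul_eq_coe_mul]
  push_cast
  ring

/-- Green's second identity on the sphere: the annulus version splits into a radial factor, which
is positive, and the integral over the sphere. -/
theorem integral_sphere_wronskian (hf : IsSmoothOnSphere f) (hg : IsSmoothOnSphere g) :
    ∫ x : sphere (0 : E) 1, (f x * Δ g x - Δ f x * g x) ∂μ.toSphere = 0 := by
  rcases subsingleton_or_nontrivial E with _ | _
  · simp [(μ.toSphere_eq_zero_iff).2 ‹_›]
  let w (r : ℝ) : ℝ := annulusBump (r ^ 2) • (annulusBump (r ^ 2) * (r⁻¹) ^ 2)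
  have hw : Continuous fun x : E => w ‖x‖ := by
    refine (contDiff_annulusBump_smul (n := 0) (contDiffOn_zero.2 ?_)).continuous
    exact (annulusBump.continuous.comp (continuous_norm.pow 2)).continuousOn.mul
      ((continuous_norm.continuousOn.inv₀ fun x hx => norm_ne_zero_iff.2 hx).pow 2)
  have hw_pos := integral_volumeIoiPow_pos hw (hasCompactSupport_annulusBump_smul _)
    (fun r => smul_nonneg annulusBump.nonneg (mul_nonneg annulusBump.nonneg (by positivity)))
    (by simp [w, annulusBump_one])
  refine (smul_eq_zero.1 ((integral_norm_smul_normalize μ w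
    fun x => f x * Δ g x - Δ f x * g x).symm.trans ?_)).resolve_left hw_pos.ne'
  rw [← hf.integral_annulus_wronskian μ hg]
  refine integral_congr_ae (.of_forall fun x => ?_)
  rcases eq_or_ne x 0 with rfl | hx
  · simp [w, annulusBump_eq_zero]
  have hw_norm : w ‖x‖ = annulusBump (‖x‖ ^ 2) ^ 2 * ‖x‖⁻¹ ^ 2 := by
    simp only [w, smul_eq_mul]
    ring
  simp only [hw_norm, hf.laplacian_normalize hx, hg.laplacian_normalize hx, ← hf.apply_normalize hx,
    ← hg.apply_normalize hx, RCLike.real_smul_eq_coe_mul]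
  push_cast
  ring

end IsSmoothOnSphere

end Green

section Isometry

variable {E F : Type*} [NormedAddCommGroup E] [InnerProductSpace ℝ E] [FiniteDimensional ℝ E]
  [MeasurableSpace E] [BorelSpace E] [NormedAddCommGroup F] [NormedSpace ℝ F]

theorem integral_sphere_comp_linearIsometryEquiv (U : E ≃ₗᵢ[ℝ] E) (H : E → F) :
    ∫ x : sphere (0 : E) 1, H (U x) ∂volume.toSphere =
      ∫ x : sphere (0 : E) 1, H x ∂volume.toSphere := by
  rcases subsingleton_or_nontrivial E with _ | _
  · simp [(volume.toSphere_eq_zero_iff).2 ‹_›]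
  let w (r : ℝ) : ℝ := annulusBump (r ^ 2) • 1
  have hw_pos := integral_volumeIoiPow_pos (E := E) (w := w)
    (contDiff_annulusBump_smul (n := 0) contDiffOn_const).continuous
    (hasCompactSupport_annulusBump_smul _) (fun r => smul_nonneg annulusBump.nonneg zero_le_one)
    (by simp [w, annulusBump_one])
  refine smul_right_injective F hw_pos.ne' ?_
  calc _ = ∫ x, w ‖x‖ • H (U (‖x‖⁻¹ • x)) :=
        (integral_norm_smul_normalize volume w fun x => H (U x)).symm
    _ = ∫ x, w ‖x‖ • H (‖x‖⁻¹ • x) := by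
        simpa using U.measurePreserving.integral_comp' (f := U.toMeasurableEquiv)
          fun x => w ‖x‖ • H (‖x‖⁻¹ • x)
    _ = _ := integral_norm_smul_normalize volume w H

end Isometry

theorem prod_zpow_eq_zpow_sum {G κ : Type*} [CommGroupWithZero G] {u : G} (hu : u ≠ 0)
    (s : Finset κ) (n : κ → ℤ) : ∏ k ∈ s, u ^ n k = u ^ ∑ k ∈ s, n k := by
  classical
  induction s using Finset.induction_on with
  | empty => simp
  | insert k s hk ih => rw [Finset.prod_insert hk, Finset.sum_insert hk, ih, zpow_add₀ hu]

section PolynomialFunction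

variable {E κ : Type*} [NormedAddCommGroup E] [NormedSpace ℝ E] (ℓ : κ → E →L[ℝ] ℂ)
  {p : MvPolynomial κ ℂ} {d : ℕ}

/-- The polynomial functions on `E` in the complex-valued real-linear coordinates `ℓ k`. -/
def polyFun : MvPolynomial κ ℂ →ₐ[ℂ] E → ℂ :=
  aeval fun k x => ℓ k x

theorem polyFun_apply (p : MvPolynomial κ ℂ) (x : E) :
    polyFun ℓ p x = eval (fun k => ℓ k x) p :=
  comp_aeval_apply _ (Pi.evalAlgHom ℂ (fun _ : E => ℂ) x) p

theorem polyFun_X (k : κ) : polyFun ℓ (X k) = ℓ k :=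
  aeval_X _ k

theorem polyFun_smul (hp : p.IsHomogeneous d) (c : ℝ) (x : E) :
    polyFun ℓ p (c • x) = c ^ d • polyFun ℓ p x := by
  simp only [polyFun_apply, eval_eq, map_smul, Complex.real_smul, mul_pow, Finset.prod_mul_distrib,
    Finset.prod_pow_eq_pow_sum, Complex.ofReal_pow, Finset.mul_sum]
  refine Finset.sum_congr rfl fun e he => ?_
  rw [← hp.degree_eq_sum_deg_support he]
  ring

theorem polyFun_comp {w : κ → ℤ} {n : ℤ} (hp : p.IsWeightedHomogeneous w n) {u : ℂ} (hu : u ≠ 0)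
    {U : E → E} (hU : ∀ k x, ℓ k (U x) = u ^ w k * ℓ k x) (x : E) :
    polyFun ℓ p (U x) = u ^ n * polyFun ℓ p x := by
  simp only [polyFun_apply, eval_eq, hU, mul_pow, Finset.prod_mul_distrib, Finset.mul_sum]
  refine Finset.sum_congr rfl fun e he => ?_
  have hprod : ∏ k ∈ e.support, (u ^ w k) ^ e k = u ^ n := by
    rw [← hp (mem_support_iff.1 he), Finsupp.weight_apply]
    simp only [Finsupp.sum, ← prod_zpow_eq_zpow_sum hu, nsmul_eq_mul, mul_comm (Nat.cast _ : ℤ),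
      zpow_mul, zpow_natCast]
  rw [hprod]
  ring

theorem contDiff_polyFun {n : ℕ∞} (p : MvPolynomial κ ℂ) : ContDiff ℝ n (polyFun ℓ p) := by
  induction p using MvPolynomial.induction_on with
  | C a =>
    rw [← algebraMap_eq, AlgHom.commutes]
    exact contDiff_const
  | add p q hp hq =>
    rw [map_add]
    exact hp.add hq
  | mul_X p k hp =>
    rw [map_mul, polyFun_X]
    exact hp.mul (ℓ k).contDiff

theorem hasFDerivAt_polyFun [Fintype κ] (p : MvPolynomial κ ℂ) (x : E) :
    HasFDerivAt (polyFun ℓ p) (∑ k, polyFun ℓ (pderiv k p) x • ℓ k) x := by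
  classical
  induction p using MvPolynomial.induction_on with
  | C a =>
    rw [← algebraMap_eq, AlgHom.commutes]
    exact (hasFDerivAt_const a x).congr_fderiv (by ext v; simp)
  | add p q hp hq =>
    rw [map_add]
    refine (hp.add hq).congr_fderiv ?_
    ext v
    simp [add_mul, Finset.sum_add_distrib]
  | mul_X p i hp =>
    rw [map_mul, polyFun_X]
    refine (hp.mul (ℓ i).hasFDerivAt).congr_fderiv ?_
    ext v
    simp [polyFun_X, pderiv_X, Pi.single_apply, add_mul, Finset.sum_add_distrib, mul_assoc,
      Finset.mul_sum, apply_ite, ite_apply]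

theorem eq_zero_of_polyFun_eq_zero [Finite κ] (hℓ : LinearIndependent ℂ ℓ)
    (hp : p.IsHomogeneous d) (h : polyFun ℓ p = 0) : p = 0 := by
  have := Fintype.ofFinite κ
  induction d generalizing p with
  | zero =>
    rw [totalDegree_eq_zero_iff_eq_C.1 (Nat.le_zero.1 hp.totalDegree_le)] at h ⊢
    simpa [polyFun_apply] using congrFun h 0
  | succ d ih =>
    have hpderiv (k : κ) : pderiv k p = 0 := by
      refine ih hp.pderiv (funext fun x => ?_)
      have hfderiv := (hasFDerivAt_polyFun ℓ p x).fderiv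
      rw [h, fderiv_zero, Pi.zero_apply] at hfderiv
      exact Fintype.linearIndependent_iff.1 hℓ _ hfderiv.symm k
    have heuler := hp.sum_X_mul_pderiv
    simp only [hpderiv, mul_zero, Finset.sum_const_zero] at heuler
    exact (smul_eq_zero.1 heuler.symm).resolve_left d.succ_ne_zero

end PolynomialFunction

section PolynomialLaplacian

variable {E κ : Type*} [NormedAddCommGroup E] [InnerProductSpace ℝ E] (ℓ : κ → E →L[ℝ] ℂ)
  {p : MvPolynomial κ ℂ} {d : ℕ} {x : E}

theorem isSmoothOnSphere_polyFun_normalize (p : MvPolynomial κ ℂ) :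
    IsSmoothOnSphere fun x => polyFun ℓ p (‖x‖⁻¹ • x) where
  contDiffOn x hx := by
    have hx' : x ≠ 0 := hx
    exact ((contDiff_polyFun ℓ p (n := ⊤)).contDiffAt.comp x
      (((contDiffAt_norm ℝ hx').inv (norm_ne_zero_iff.2 hx')).smul contDiffAt_id)).contDiffWithinAt
  map_smul c hc x := by
    rw [norm_smul, Real.norm_of_nonneg hc.le, mul_inv, smul_smul, mul_right_comm,
      inv_mul_cancel₀ hc.ne', one_mul]

variable [FiniteDimensional ℝ E]

theorem laplacian_polyFun {ι : Type*} [Fintype ι] [Fintype κ] (b : OrthonormalBasis ι ℝ E)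
    (p : MvPolynomial κ ℂ) :
    Δ (polyFun ℓ p) x =
      ∑ k, ∑ l, (∑ i, ℓ k (b i) * ℓ l (b i)) * polyFun ℓ (pderiv l (pderiv k p)) x := by
  have hfirst (v : E) : (fun y => fderiv ℝ (polyFun ℓ p) y v) =
      fun y => ∑ k, polyFun ℓ (pderiv k p) y * ℓ k v := by
    funext y
    simp [(hasFDerivAt_polyFun ℓ p y).fderiv]
  have hsecond (v : E) : HasFDerivAt (fun y => ∑ k, polyFun ℓ (pderiv k p) y * ℓ k v)
      (∑ k, ℓ k v • ∑ l, polyFun ℓ (pderiv l (pderiv k p)) x • ℓ l) x :=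
    .fun_sum fun k _ => (hasFDerivAt_polyFun ℓ (pderiv k p) x).mul_const (ℓ k v)
  rw [laplacian_eq_sum_fderiv_fderiv b (contDiff_polyFun ℓ p (n := 2)).contDiffAt]
  simp only [hfirst, (hsecond _).fderiv]
  simp only [sum_apply, smul_apply, Finset.sum_mul, smul_eq_mul, Finset.mul_sum]
  rw [Finset.sum_comm]
  refine Finset.sum_congr rfl fun k _ => ?_
  rw [Finset.sum_comm]
  exact Finset.sum_congr rfl fun l _ => Finset.sum_congr rfl fun i _ => by ring

theorem laplacian_polyFun_normalize (hp : p.IsHomogeneous d) (hx : ‖x‖ = 1) :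
    Δ (fun y => polyFun ℓ p (‖y‖⁻¹ • y)) x =
      Δ (polyFun ℓ p) x - (d * (d + finrank ℝ E - 2) : ℝ) • polyFun ℓ p x := by
  let φ (t : ℝ) : ℝ := t ^ (-d / 2 : ℝ)
  have hnormalize : (fun y => polyFun ℓ p (‖y‖⁻¹ • y)) =
      fun y => φ (‖y‖ ^ 2) • polyFun ℓ p y := by
    funext y
    rw [polyFun_smul ℓ hp]
    congr 1
    simp only [φ]
    rw [← Real.rpow_natCast ‖y‖ 2, ← Real.rpow_mul (norm_nonneg y), inv_pow, ← Real.rpow_natCast,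
      ← Real.rpow_neg (norm_nonneg y)]
    congr 1
    push_cast
    ring
  have hderiv : deriv φ =ᶠ[𝓝 1] fun t => (-d / 2 : ℝ) * t ^ (-d / 2 - 1 : ℝ) := by
    filter_upwards [isOpen_ne.mem_nhds (one_ne_zero (α := ℝ))] with t ht
    exact (Real.hasDerivAt_rpow_const (.inl ht)).deriv
  have hderiv₂ : deriv (deriv φ) 1 = (-d / 2 : ℝ) * (-d / 2 - 1) := by
    rw [hderiv.deriv_eq, ((Real.hasDerivAt_rpow_const (.inl one_ne_zero)).const_mul _).deriv]
    simp
  have hfd := fderiv_apply_self_of_homogeneous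
    ((contDiff_polyFun ℓ p (n := 1)).differentiable one_ne_zero x) fun c _ => polyFun_smul ℓ hp c x
  rw [hnormalize, laplacian_comp_norm_sq_smul (d := d)
      (Real.contDiffAt_rpow_const_of_ne (by simp [hx]))
      (contDiff_polyFun ℓ p (n := 2)).contDiffAt hfd, hx, one_pow, hderiv.eq_of_nhds, hderiv₂]
  simp only [Real.one_rpow]
  module

end PolynomialLaplacian

section Density

variable {X 𝕜 : Type*} [TopologicalSpace X] [CompactSpace X] [MeasurableSpace X] [BorelSpace X]
  [RCLike 𝕜] {μ : Measure X} [IsFiniteMeasure μ] [μ.IsOpenPosMeasure]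

theorem eq_zero_of_forall_mem_integral_mul_eq_zero {A : StarSubalgebra 𝕜 C(X, 𝕜)}
    (hA : A.SeparatesPoints) {f : C(X, 𝕜)} (hf : ∀ a ∈ A, ∫ x, f x * a x ∂μ = 0) : f = 0 := by
  have hcont : Continuous fun a : C(X, 𝕜) => ∫ x, f x * a x ∂μ := by
    refine (continuous_integral.comp <| (ContinuousMap.toLp (E := 𝕜) 1 μ 𝕜).continuous.comp <|
      continuous_const_mul f).congr fun a => ?_
    exact integral_congr_ae (ContinuousMap.coeFn_toLp μ (f * a))
  have hstar : star f ∈ A.topologicalClosure := by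
    rw [ContinuousMap.starSubalgebra_topologicalClosure_eq_top_of_separatesPoints A hA]
    trivial
  have hnorm : ∫ x, ‖f x‖ ^ 2 ∂μ = 0 := by
    have hzero : ∫ x, f x * star f x ∂μ = 0 :=
      closure_minimal (t := {a : C(X, 𝕜) | ∫ x, f x * a x ∂μ = 0}) hf
        (isClosed_eq hcont continuous_const) hstar
    simp only [ContinuousMap.star_apply, RCLike.star_def, RCLike.mul_conj] at hzero
    exact_mod_cast hzero
  by_contra hne
  obtain ⟨x, hx⟩ := DFunLike.ne_iff.1 hne
  have hpos : 0 < ∫ x, ‖f x‖ ^ 2 ∂μ :=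
    (f.continuous.norm.pow 2).integral_pos_of_hasCompactSupport_nonneg_nonzero
      (.of_compactSpace _) (fun _ => by positivity) (x := x) (by simpa using hx)
  exact hpos.ne' hnorm

end Density

section Moment

variable {E κ : Type*} [NormedAddCommGroup E] [NormedSpace ℝ E] [FiniteDimensional ℝ E]
  [MeasurableSpace E] [BorelSpace E] (μ : Measure E) [μ.IsAddHaarMeasure] (ℓ : κ → E →L[ℝ] ℂ)

theorem integrable_mul_polyFun (f : C(sphere (0 : E) 1, ℂ)) (p : MvPolynomial κ ℂ) :
    Integrable (fun x : sphere (0 : E) 1 => f x * polyFun ℓ p x) μ.toSphere :=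
  (f.continuous.mul ((contDiff_polyFun ℓ p (n := 0)).continuous.comp
    continuous_subtype_val)).integrable_of_hasCompactSupport (.of_compactSpace _)

/-- The moments of a continuous function on the sphere against the polynomials in the coordinates
`ℓ k`. -/
def sphereMoment : C(sphere (0 : E) 1, ℂ) →ₗ[ℂ] MvPolynomial κ ℂ →ₗ[ℂ] ℂ :=
  LinearMap.mk₂ ℂ (fun f p => ∫ x : sphere (0 : E) 1, f x * polyFun ℓ p x ∂μ.toSphere)
    (fun f g p => by
      simp only [ContinuousMap.add_apply, add_mul]
      exact integral_add (integrable_mul_polyFun μ ℓ f p) (integrable_mul_polyFun μ ℓ g p))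
    (fun c f p => by simp [mul_assoc, integral_const_mul])
    (fun f p q => by
      simp only [map_add, Pi.add_apply, mul_add]
      exact integral_add (integrable_mul_polyFun μ ℓ f p) (integrable_mul_polyFun μ ℓ f q))
    (fun c f p => by simp [mul_left_comm _ c, integral_const_mul])

theorem eq_zero_of_sphereMoment_eq_zero (hsep : ∀ x y, (∀ k, ℓ k x = ℓ k y) → x = y)
    (hstar : ∀ k, ∃ k', ∀ x, star (ℓ k x) = ℓ k' x) {f : C(sphere (0 : E) 1, ℂ)}
    (hf : sphereMoment μ ℓ f = 0) : f = 0 := by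
  let z (k : κ) : C(sphere (0 : E) 1, ℂ) := ⟨fun x => ℓ k x, by fun_prop⟩
  have hz : star (range z) ⊆ range z := by
    rintro a ⟨k, hk⟩
    obtain ⟨k', hk'⟩ := hstar k
    refine ⟨k', ?_⟩
    rw [← star_star a, ← hk]
    ext x
    exact (hk' x).symm
  refine eq_zero_of_forall_mem_integral_mul_eq_zero (A := StarAlgebra.adjoin ℂ (range z))
    (μ := μ.toSphere) (fun x y hxy => ?_) fun a ha => ?_
  · by_contra! hadjoin
    exact hxy (Subtype.ext (hsep _ _ fun k => hadjoin _
      ⟨z k, StarAlgebra.subset_adjoin ℂ _ ⟨k, rfl⟩, rfl⟩))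
  · rw [← StarSubalgebra.mem_toSubalgebra, StarAlgebra.adjoin_toSubalgebra,
      union_eq_self_of_subset_right hz, Algebra.adjoin_range_eq_range_aeval] at ha
    obtain ⟨p, rfl⟩ := (AlgHom.mem_range _).1 ha
    have hp (x : sphere (0 : E) 1) : aeval z p x = polyFun ℓ p x :=
      (comp_aeval_apply z (ContinuousMap.evalAlgHom ℂ ℂ x) p).trans (polyFun_apply ℓ p x).symm
    simp only [hp]
    exact LinearMap.congr_fun hf p

end Moment

section Recursion

variable {E κ : Type*} [NormedAddCommGroup E] [InnerProductSpace ℝ E] [FiniteDimensional ℝ E]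
  [MeasurableSpace E] [BorelSpace E] (μ : Measure E) [μ.IsAddHaarMeasure] (ℓ : κ → E →L[ℝ] ℂ)

namespace IsSmoothOnSphere

/-- The restriction to the unit sphere. -/
def restrict {F : Type*} [NormedAddCommGroup F] [NormedSpace ℝ F] {f : E → F}
    (hf : IsSmoothOnSphere f) : C(sphere (0 : E) 1, F) :=
  ⟨fun x => f x, hf.contDiffOn.continuousOn.comp_continuous continuous_subtype_val
    fun x => ne_zero_of_mem_unit_sphere x⟩

/-- A polynomial of degree `d` restricts to a function whose spherical Laplacian is, up to the terms
coming from its flat Laplacian, `-d (d + n - 2)` times itself; now apply Green's identity. -/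
theorem sphereMoment_restrict_of_isHomogeneous {f : E → ℂ} (hf : IsSmoothOnSphere f)
    {c : ℂ} (hc : ∀ x, ‖x‖ = 1 → Δ f x = -c * f x) {p q : MvPolynomial κ ℂ} {d : ℕ}
    (hp : p.IsHomogeneous d) (hq : Δ (polyFun ℓ p) = polyFun ℓ q) :
    (d * (d + finrank ℝ E - 2) - c) * sphereMoment μ ℓ hf.restrict p =
      sphereMoment μ ℓ hf.restrict q := by
  have hgreen := hf.integral_sphere_wronskian μ (isSmoothOnSphere_polyFun_normalize ℓ p)
  have hpoint (x : sphere (0 : E) 1) :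
      f x * Δ (fun y => polyFun ℓ p (‖y‖⁻¹ • y)) x - Δ f x * polyFun ℓ p (‖x.1‖⁻¹ • x) =
        hf.restrict x * polyFun ℓ (q - (d * (d + finrank ℝ E - 2) - c) • p) x := by
    have hx : ‖x.1‖ = 1 := norm_eq_of_mem_sphere x
    rw [laplacian_polyFun_normalize ℓ hp hx, hc _ hx, hx, hq, inv_one, one_smul]
    simp only [restrict, ContinuousMap.coe_mk, map_sub, _root_.map_smul, Pi.sub_apply,
      Pi.smul_apply, smul_eq_mul, Complex.real_smul]
    push_cast
    ring
  simp only [hpoint] at hgreen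
  have hmoment : sphereMoment μ ℓ hf.restrict (q - (d * (d + finrank ℝ E - 2) - c) • p) = 0 :=
    hgreen
  rw [map_sub, _root_.map_smul, smul_eq_mul, sub_eq_zero] at hmoment
  exact hmoment.symm

end IsSmoothOnSphere

end Recursion

section HopfCoordinates

/-- The coordinates `z₁, z̄₁, z₂, z̄₂` of `ℂ² = ℝ⁴`. -/
def hopfCoord : Fin 4 → E4 →L[ℝ] ℂ :=
  let π (i : Fin 4) : E4 →L[ℝ] ℂ := Complex.ofRealCLM.comp (EuclideanSpace.proj i)
  ![π 0 + Complex.I • π 1, π 0 - Complex.I • π 1, π 2 + Complex.I • π 3, π 2 - Complex.I • π 3]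

/-- The weights of the coordinates `hopfCoord` under the circle action. -/
def hopfWeight : Fin 4 → ℤ := ![1, -1, -1, 1]

theorem hopfCoord_apply (k : Fin 4) (x : E4) :
    hopfCoord k x = ![x 0 + Complex.I * x 1, x 0 - Complex.I * x 1,
      x 2 + Complex.I * x 3, x 2 - Complex.I * x 3] k := by
  fin_cases k <;> simp [hopfCoord]

theorem star_hopfCoord (k : Fin 4) :
    ∃ k', ∀ x, star (hopfCoord k x) = hopfCoord k' x := by
  refine ⟨![1, 0, 3, 2] k, fun x => ?_⟩
  fin_cases k <;> simp [hopfCoord_apply, sub_eq_add_neg]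

theorem linearIndependent_hopfCoord : LinearIndependent ℂ hopfCoord := by
  refine Fintype.linearIndependent_iff.mpr fun c hc => ?_
  have key (i : Fin 4) := DFunLike.congr_fun hc (EuclideanSpace.single i 1)
  have h0 : c 0 + c 1 = 0 := by simpa [Fin.sum_univ_four, hopfCoord_apply] using key 0
  have h1 : c 0 * Complex.I - c 1 * Complex.I = 0 := by
    simpa [Fin.sum_univ_four, hopfCoord_apply, ← sub_eq_add_neg] using key 1
  have h2 : c 2 + c 3 = 0 := by simpa [Fin.sum_univ_four, hopfCoord_apply] using key 2
  have h3 : c 2 * Complex.I - c 3 * Complex.I = 0 := by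
    simpa [Fin.sum_univ_four, hopfCoord_apply, ← sub_eq_add_neg] using key 3
  have hI := Complex.I_mul_I
  intro i
  fin_cases i
  · change c 0 = 0
    linear_combination (1 / 2) * h0 - Complex.I / 2 * h1 + (c 0 - c 1) / 2 * hI
  · change c 1 = 0
    linear_combination (1 / 2) * h0 + Complex.I / 2 * h1 - (c 0 - c 1) / 2 * hI
  · change c 2 = 0
    linear_combination (1 / 2) * h2 - Complex.I / 2 * h3 + (c 2 - c 3) / 2 * hI
  · change c 3 = 0
    linear_combination (1 / 2) * h2 + Complex.I / 2 * h3 - (c 2 - c 3) / 2 * hI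

theorem ext_hopfCoord {x y : E4} (h : ∀ k, hopfCoord k x = hopfCoord k y) : x = y := by
  have h0 := h 0
  have h2 := h 2
  simp only [hopfCoord_apply, Complex.ext_iff] at h0 h2
  ext i
  fin_cases i
  · simpa using h0.1
  · simpa using h0.2
  · simpa using h2.1
  · simpa using h2.2

theorem hopfCoord_mul_add_mul (x : E4) :
    hopfCoord 0 x * hopfCoord 1 x + hopfCoord 2 x * hopfCoord 3 x = (‖x‖ ^ 2 : ℝ) := by
  simp only [hopfCoord_apply, EuclideanSpace.real_norm_sq_eq, Fin.sum_univ_four, Matrix.cons_val]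
  push_cast
  linear_combination (-(x 1 : ℂ) ^ 2 - (x 3 : ℂ) ^ 2) * Complex.I_sq

theorem hopfCoord_hopfAct (s : ℝ) (k : Fin 4) (x : E4) :
    hopfCoord k (hopfAct s x) = Complex.exp (Complex.I * s) ^ hopfWeight k * hopfCoord k x := by
  have hpos : Complex.exp (Complex.I * s) = Complex.cos s + Complex.I * Complex.sin s := by
    rw [mul_comm, Complex.exp_mul_I, mul_comm Complex.I]
  have hneg : (Complex.cos s + Complex.I * Complex.sin s)⁻¹
      = Complex.cos s - Complex.I * Complex.sin s := by
    rw [← hpos, ← Complex.exp_neg, ← mul_neg, mul_comm, Complex.exp_mul_I, Complex.cos_neg,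
      Complex.sin_neg]
    ring
  fin_cases k <;>
    simp only [Fin.zero_eta, Fin.mk_one, Fin.reduceFinMk, hopfCoord_apply, hopfAct,
      WithLp.equiv_symm_apply, hopfWeight, Matrix.cons_val, zpow_neg, zpow_one, hpos, hneg] <;>
    push_cast
  · linear_combination -Complex.sin s * x 1 * Complex.I_sq
  · linear_combination -Complex.sin s * x 1 * Complex.I_sq
  · linear_combination Complex.sin s * x 3 * Complex.I_sq
  · linear_combination Complex.sin s * x 3 * Complex.I_sq

/-- The circle action as a group of linear isometries of `ℝ⁴`. -/
def hopfIsometry (s : ℝ) : E4 ≃ₗᵢ[ℝ] E4 :=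
  LinearIsometry.toLinearIsometryEquiv
    { toFun := hopfAct s
      map_add' := fun x y => by
        ext i
        fin_cases i <;>
          simp only [hopfAct, PiLp.add_apply, WithLp.equiv_symm_apply, Fin.zero_eta, Fin.mk_one,
            Fin.reduceFinMk, Matrix.cons_val] <;>
          ring
      map_smul' := fun r x => by
        ext i
        fin_cases i <;>
          simp only [hopfAct, PiLp.smul_apply, smul_eq_mul, WithLp.equiv_symm_apply, Fin.zero_eta,
            Fin.mk_one, Fin.reduceFinMk, Matrix.cons_val, Real.ringHom_apply] <;>
          ring
      norm_map' := fun x => by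
        have h : ‖hopfAct s x‖ ^ 2 = ‖x‖ ^ 2 := by
          simp only [EuclideanSpace.real_norm_sq_eq, Fin.sum_univ_four, hopfAct,
            WithLp.equiv_symm_apply, Matrix.cons_val]
          linear_combination (x 0 ^ 2 + x 1 ^ 2 + x 2 ^ 2 + x 3 ^ 2) * Real.sin_sq_add_cos_sq s
        exact (sq_eq_sq₀ (norm_nonneg _) (norm_nonneg _)).mp h } rfl

theorem hopfIsometry_apply (s : ℝ) (x : E4) : hopfIsometry s x = hopfAct s x := rfl

theorem lap4_eq_laplacian {f : E4 → ℂ} {x : E4} (hf : ContDiffAt ℝ 2 f x) :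
    lap4 f x = Δ f x := by
  simp [lap4, laplacian_eq_sum_fderiv_fderiv (EuclideanSpace.basisFun (Fin 4) ℝ) hf]

theorem isEigenSection_iff {m : ℤ} {μ : ℝ} {f : E4 → ℂ} :
    IsEigenSection m μ f ↔ IsSmoothOnSphere f ∧
      (∀ (s : ℝ) (x : E4), f (hopfAct s x) = Complex.exp (Complex.I * m * s) * f x) ∧
      ∀ x, ‖x‖ = 1 → Δ f x = -(4 * μ + m ^ 2 : ℝ) * f x := by
  have key (hf : IsSmoothOnSphere f) (x : E4) (hx : ‖x‖ = 1) :
      (1 / 4 : ℂ) * (-(lap4 f x) - (m : ℂ) ^ 2 * f x) = (μ : ℂ) * f x ↔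
        Δ f x = -(4 * μ + m ^ 2 : ℝ) * f x := by
    rw [lap4_eq_laplacian ((hf.contDiffAt (norm_ne_zero_iff.mp (by simp [hx]))).of_le
      ENat.LEInfty.out)]
    push_cast
    constructor <;> intro h
    · linear_combination -4 * h
    · linear_combination (-1 / 4 : ℂ) * h
  constructor
  · rintro ⟨hsmooth, hhom, hweight, heigen⟩
    have hf : IsSmoothOnSphere f := ⟨hsmooth, hhom⟩
    exact ⟨hf, hweight, fun x hx => (key hf x hx).mp (heigen x hx)⟩
  · rintro ⟨hf, hweight, heigen⟩
    exact ⟨hf.contDiffOn, hf.map_smul, hweight, fun x hx => (key hf x hx).mpr (heigen x hx)⟩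

/-- The Laplacian of `ℂ²` in the coordinates `z₁, z̄₁, z₂, z̄₂`, acting on polynomials. -/
def complexLaplacian : MvPolynomial (Fin 4) ℂ →ₗ[ℂ] MvPolynomial (Fin 4) ℂ :=
  (4 : ℂ) • ((pderiv 0).toLinearMap ∘ₗ (pderiv 1).toLinearMap
    + (pderiv 2).toLinearMap ∘ₗ (pderiv 3).toLinearMap)

theorem complexLaplacian_apply (p : MvPolynomial (Fin 4) ℂ) :
    complexLaplacian p = (4 : ℂ) • (pderiv 0 (pderiv 1 p) + pderiv 2 (pderiv 3 p)) :=
  rfl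

theorem pderiv_pderiv_comm {κ R : Type*} [CommRing R] (k l : κ) (p : MvPolynomial κ R) :
    pderiv k (pderiv l p) = pderiv l (pderiv k p) := by
  have h : ⁅pderiv (R := R) k, pderiv (R := R) l⁆ = 0 := by
    classical
    refine derivation_ext fun i => ?_
    simp [Derivation.commutator_apply, pderiv_X, Pi.single_apply, apply_ite]
  simpa [Derivation.commutator_apply, sub_eq_zero] using DFunLike.congr_fun h p

theorem laplacian_polyFun_hopfCoord (p : MvPolynomial (Fin 4) ℂ) :
    Δ (polyFun hopfCoord p) = polyFun hopfCoord (complexLaplacian p) := by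
  have gram (k l : Fin 4) : ∑ i, hopfCoord k (EuclideanSpace.basisFun (Fin 4) ℝ i)
      * hopfCoord l (EuclideanSpace.basisFun (Fin 4) ℝ i)
      = !![0, 2, 0, 0; 2, 0, 0, 0; 0, 0, 0, 2; 0, 0, 2, 0] k l := by
    fin_cases k <;> fin_cases l <;>
      simp [Fin.sum_univ_four, hopfCoord_apply, one_add_one_eq_two]
  funext x
  rw [laplacian_polyFun hopfCoord (EuclideanSpace.basisFun (Fin 4) ℝ)]
  simp only [gram, Fin.sum_univ_four, Matrix.of_apply, Matrix.cons_val, complexLaplacian_apply,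
    pderiv_pderiv_comm (1 : Fin 4) 0 p, pderiv_pderiv_comm (3 : Fin 4) 2 p, map_add,
    _root_.map_smul, Pi.add_apply, Pi.smul_apply, smul_eq_mul]
  ring

end HopfCoordinates

section HopfMoment

/-- A moment functional on polynomials in `z₁, z̄₁, z₂, z̄₂` of the kind arising from integration
over `S³` against an eigensection of `H^m`, where `c` is the eigenvalue of `Δ_{S³}`. -/
structure IsHopfMoment (m : ℤ) (c : ℂ) (M : MvPolynomial (Fin 4) ℂ →ₗ[ℂ] ℂ) : Prop where
  recursion {d : ℕ} {p : MvPolynomial (Fin 4) ℂ} (hp : p.IsHomogeneous d) :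
    (d * (d + 2) - c) * M p = M (complexLaplacian p)
  weight {n : ℤ} {p : MvPolynomial (Fin 4) ℂ} (hp : p.IsWeightedHomogeneous hopfWeight n)
    (hn : n ≠ -m) : M p = 0
  normSq (p : MvPolynomial (Fin 4) ℂ) : M ((X 0 * X 1 + X 2 * X 3) * p) = M p

/-- The monomial `z₁ᵃ z̄₁ᵇ z₂ᶜ z̄₂ᵉ`. -/
def hopfMonomial (a b c e : ℕ) : MvPolynomial (Fin 4) ℂ := X 0 ^ a * X 1 ^ b * X 2 ^ c * X 3 ^ e

/-- The monomials of degree `A + B` and weight `B - A` with `z₁`-exponent or `z̄₁`-exponent zero: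
the others reduce to them modulo `|z₁|² + |z₂|² = 1` and lower degrees. -/
def normalMonomial (A B : ℕ) (k : Fin (A + B + 1)) : MvPolynomial (Fin 4) ℂ :=
  hopfMonomial (k - A) (A - k) (A - (A - k)) (B - (k - A))

theorem isHomogeneous_hopfMonomial (a b c e : ℕ) :
    (hopfMonomial a b c e).IsHomogeneous (a + b + c + e) := by
  simpa [hopfMonomial] using ((((isHomogeneous_X ℂ 0).pow a).mul ((isHomogeneous_X ℂ 1).pow b)).mul
    ((isHomogeneous_X ℂ 2).pow c)).mul ((isHomogeneous_X ℂ (3 : Fin 4)).pow e)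

theorem isWeightedHomogeneous_hopfMonomial (a b c e : ℕ) :
    (hopfMonomial a b c e).IsWeightedHomogeneous hopfWeight (a - b - c + e : ℤ) := by
  have h (k : Fin 4) (n : ℕ) := (isWeightedHomogeneous_X ℂ hopfWeight k).pow n
  convert (((h 0 a).mul (h 1 b)).mul (h 2 c)).mul (h 3 e) using 1
  · rfl
  · simp only [hopfWeight, Matrix.cons_val, nsmul_eq_mul]
    ring

theorem monomial_eq_hopfMonomial (s : Fin 4 →₀ ℕ) :
    monomial s (1 : ℂ) = hopfMonomial (s 0) (s 1) (s 2) (s 3) := by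
  simp [monomial_eq, hopfMonomial, Finsupp.prod_fintype, Fin.prod_univ_four]

theorem isHomogeneous_complexLaplacian {p : MvPolynomial (Fin 4) ℂ} {d : ℕ}
    (hp : p.IsHomogeneous d) : (complexLaplacian p).IsHomogeneous (d - 1 - 1) := by
  simpa [complexLaplacian, smul_eq_C_mul, mul_add] using
    (isHomogeneous_C (Fin 4) (4 : ℂ)).mul
      ((hp.pderiv (i := 1)).pderiv (i := 0) |>.add ((hp.pderiv (i := 3)).pderiv (i := 2)))

namespace IsHopfMoment

variable {m : ℤ} {c : ℂ} {M : MvPolynomial (Fin 4) ℂ →ₗ[ℂ] ℂ}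

theorem eq_zero_of_critical (hM : IsHopfMoment m c M)
    (h : ∀ (d : ℕ) (p : MvPolynomial (Fin 4) ℂ), (d * (d + 2) : ℂ) = c →
      (∀ d' < d, ∀ q : MvPolynomial (Fin 4) ℂ, q.IsHomogeneous d' → M q = 0) →
      p.IsHomogeneous d → M p = 0) : M = 0 := by
  have hom (d : ℕ) : ∀ p : MvPolynomial (Fin 4) ℂ, p.IsHomogeneous d → M p = 0 := by
    induction d using Nat.strong_induction_on with
    | _ d ih =>
      intro p hp
      by_cases hd : (d * (d + 2) : ℂ) = c
      · exact h d p hd ih hp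
      · refine (mul_eq_zero.mp ((hM.recursion hp).trans ?_)).resolve_left (sub_ne_zero.mpr hd)
        rcases Nat.eq_zero_or_pos d with rfl | hpos
        · obtain ⟨a, rfl⟩ : ∃ a, p = C a := ⟨_, totalDegree_eq_zero_iff_eq_C.mp
            (Nat.le_zero.mp hp.totalDegree_le)⟩
          simp [complexLaplacian]
        · exact ih _ (by omega) _ (isHomogeneous_complexLaplacian hp)
  refine LinearMap.ext fun p => ?_
  rw [LinearMap.zero_apply, ← sum_homogeneousComponent p, map_sum]
  exact Finset.sum_eq_zero fun d _ => hom d _ (homogeneousComponent_isHomogeneous d p)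

theorem apply_eq_zero_of_isHomogeneous (hM : IsHopfMoment m c M) {d : ℕ}
    (h : ∀ a b c e : ℕ, a + b + c + e = d → (a - b - c + e : ℤ) = -m →
      M (hopfMonomial a b c e) = 0)
    {p : MvPolynomial (Fin 4) ℂ} (hp : p.IsHomogeneous d) : M p = 0 := by
  rw [p.as_sum, map_sum]
  refine Finset.sum_eq_zero fun s hs => ?_
  have hdeg : s 0 + s 1 + s 2 + s 3 = d := by
    rw [← hp (mem_support_iff.mp hs), Finsupp.weight_apply, Finsupp.sum_fintype _ _ (by simp)]
    simp [Fin.sum_univ_four]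
  rw [← mul_one (coeff s p), ← smul_eq_mul, ← smul_monomial, _root_.map_smul,
    monomial_eq_hopfMonomial]
  by_cases hw : (s 0 - s 1 - s 2 + s 3 : ℤ) = -m
  · rw [h _ _ _ _ hdeg hw, smul_zero]
  · rw [hM.weight (isWeightedHomogeneous_hopfMonomial _ _ _ _) hw, smul_zero]

theorem eq_zero_of_forall_ne (hM : IsHopfMoment m c M)
    (hc : ∀ j : ℕ, c ≠ (m.natAbs + 2 * j : ℕ) * ((m.natAbs + 2 * j : ℕ) + 2)) : M = 0 := by
  refine hM.eq_zero_of_critical fun d p hd _ hp =>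
    hM.apply_eq_zero_of_isHomogeneous (fun a b c' e hdeg hw => absurd hd.symm ?_) hp
  rw [show d = m.natAbs + 2 * ((d - m.natAbs) / 2) by omega]
  exact hc _

theorem apply_hopfMonomial_succ_succ (hM : IsHopfMoment m c M) (a b c' e : ℕ) :
    M (hopfMonomial (a + 1) (b + 1) c' e)
      = M (hopfMonomial a b c' e) - M (hopfMonomial a b (c' + 1) (e + 1)) := by
  rw [← hM.normSq (hopfMonomial a b c' e), ← map_sub]
  congr 1
  simp only [hopfMonomial]
  ring

theorem eq_zero_of_normalMonomial {A B : ℕ} (hM : IsHopfMoment (A - B) ((A + B) * (A + B + 2)) M)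
    (hnormal : ∀ k, M (normalMonomial A B k) = 0) : M = 0 := by
  refine hM.eq_zero_of_critical fun d p hd hlow hp =>
    hM.apply_eq_zero_of_isHomogeneous (fun a b c e hdeg hw => ?_) hp
  obtain rfl : d = A + B := by
    have hd' : d * (d + 2) = (A + B) * (A + B + 2) := by exact_mod_cast hd
    nlinarith
  have of_normal (a b c e : ℕ) (hA : b + c = A) (hB : a + e = B) (hab : a = 0 ∨ b = 0) :
      M (hopfMonomial a b c e) = 0 := by
    rw [← hnormal ⟨A + a - b, by omega⟩]
    simp only [normalMonomial]
    congr 2 <;> omega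
  have reduce (a : ℕ) : ∀ b c e : ℕ, b + c = A → a + e = B → M (hopfMonomial a b c e) = 0 := by
    induction a with
    | zero => exact fun b c e hA hB => of_normal 0 b c e hA hB (.inl rfl)
    | succ a ih =>
      rintro (_ | b) c e hA hB
      · exact of_normal (a + 1) 0 c e hA hB (.inr rfl)
      · rw [hM.apply_hopfMonomial_succ_succ, ih b (c + 1) (e + 1) (by omega) (by omega),
          hlow _ (by omega) _ (isHomogeneous_hopfMonomial a b c e), sub_zero]
  exact reduce a b c e (by omega) (by omega)

end IsHopfMoment

end HopfMoment

section Moments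

theorem IsSmoothOnSphere.sphereMoment_restrict_eq_zero_of_weight {f : E4 → ℂ}
    (hf : IsSmoothOnSphere f) {m n : ℤ}
    (hm : ∀ (s : ℝ) (x : E4), f (hopfAct s x) = Complex.exp (Complex.I * m * s) * f x)
    {p : MvPolynomial (Fin 4) ℂ} (hp : p.IsWeightedHomogeneous hopfWeight n) (hn : n ≠ -m) :
    sphereMoment volume hopfCoord hf.restrict p = 0 := by
  have hne : (m + n : ℂ) ≠ 0 := by
    norm_cast
    omega
  set s : ℝ := Real.pi / (m + n)
  have hrot (x : E4) : f (hopfAct s x) * polyFun hopfCoord p (hopfAct s x)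
      = -(f x * polyFun hopfCoord p x) := by
    have hexp : Complex.exp (Complex.I * m * s) * Complex.exp (Complex.I * s) ^ n = -1 := by
      rw [← Complex.exp_int_mul, ← Complex.exp_add, ← Complex.exp_pi_mul_I]
      congr 1
      simp only [s]
      push_cast
      field_simp
    rw [hm, polyFun_comp hopfCoord hp (Complex.exp_ne_zero _) fun k x => hopfCoord_hopfAct s k x]
    linear_combination f x * polyFun hopfCoord p x * hexp
  have hinv := integral_sphere_comp_linearIsometryEquiv (hopfIsometry s)
    fun x => f x * polyFun hopfCoord p x
  simp only [hopfIsometry_apply, hrot, integral_neg] at hinv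
  exact neg_eq_self.mp hinv

theorem IsEigenSection.isSmoothOnSphere {m : ℤ} {μ : ℝ} {f : E4 → ℂ} (hf : IsEigenSection m μ f) :
    IsSmoothOnSphere f :=
  (isEigenSection_iff.mp hf).1

theorem IsEigenSection.isHopfMoment_sphereMoment {m : ℤ} {μ : ℝ} {f : E4 → ℂ}
    (h : IsEigenSection m μ f) :
    IsHopfMoment m (4 * μ + m ^ 2)
      (sphereMoment volume hopfCoord h.isSmoothOnSphere.restrict) := by
  obtain ⟨hf, hm, heigen⟩ := isEigenSection_iff.mp h
  refine ⟨fun {d p} hp => ?_, hf.sphereMoment_restrict_eq_zero_of_weight hm, fun p => ?_⟩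
  · rw [← hf.sphereMoment_restrict_of_isHomogeneous volume hopfCoord (c := 4 * μ + m ^ 2)
      (fun x hx => by simpa using heigen x hx) hp (laplacian_polyFun_hopfCoord p)]
    simp only [finrank_euclideanSpace_fin]
    push_cast
    ring
  · refine integral_congr_ae (.of_forall fun x => ?_)
    have hx : ‖(x : E4)‖ = 1 := norm_eq_of_mem_sphere x
    simp [polyFun_X, hopfCoord_mul_add_mul, hx]

/-- The restrictions to `S³` of the eigensections of `H^m` with eigenvalue `μ`. -/
def eigenSubmodule (m : ℤ) (μ : ℝ) : Submodule ℂ C(sphere (0 : E4) 1, ℂ) where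
  carrier := {F | ∃ f, IsEigenSection m μ f ∧ ∀ x : sphere (0 : E4) 1, f x = F x}
  zero_mem' := ⟨fun _ => 0, isEigenSection_iff.mpr ⟨⟨contDiffOn_const, fun _ _ _ => rfl⟩,
    fun _ _ => by simp, fun x _ => by simp⟩, fun _ => rfl⟩
  add_mem' := by
    rintro F G ⟨f, hf, hfF⟩ ⟨g, hg, hgG⟩
    obtain ⟨hf, hfm, hfe⟩ := isEigenSection_iff.mp hf
    obtain ⟨hg, hgm, hge⟩ := isEigenSection_iff.mp hg
    refine ⟨f + g, isEigenSection_iff.mpr ⟨⟨hf.contDiffOn.add hg.contDiffOn, fun c hc x => ?_⟩,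
      fun s x => ?_, fun x hx => ?_⟩, fun x => ?_⟩
    · simp [hf.map_smul c hc, hg.map_smul c hc]
    · simp [hfm, hgm, mul_add]
    · have hx0 : x ≠ 0 := norm_ne_zero_iff.mp (by simp [hx])
      rw [((hf.contDiffAt hx0).of_le ENat.LEInfty.out).laplacian_add
        ((hg.contDiffAt hx0).of_le ENat.LEInfty.out), hfe x hx, hge x hx, Pi.add_apply, mul_add]
    · simp [hfF, hgG]
  smul_mem' := by
    rintro a F ⟨f, hf, hfF⟩
    obtain ⟨hf, hfm, hfe⟩ := isEigenSection_iff.mp hf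
    refine ⟨a • f, isEigenSection_iff.mpr ⟨⟨contDiffOn_const.smul hf.contDiffOn, fun c hc x => ?_⟩,
      fun s x => ?_, fun x hx => ?_⟩, fun x => ?_⟩
    · simp [hf.map_smul c hc]
    · simp [hfm, mul_left_comm]
    · have hx0 : x ≠ 0 := norm_ne_zero_iff.mp (by simp [hx])
      rw [InnerProductSpace.laplacian_smul a ((hf.contDiffAt hx0).of_le ENat.LEInfty.out),
        hfe x hx, Pi.smul_apply]
      simp [mul_left_comm]
    · simp [hfF]

/-- The restriction of an eigensection to `S³`. -/
def IsEigenSection.restrict {m : ℤ} {μ : ℝ} {f : E4 → ℂ} (hf : IsEigenSection m μ f) :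
    eigenSubmodule m μ :=
  ⟨hf.isSmoothOnSphere.restrict, f, hf, fun _ => rfl⟩

theorem IsEigenSection.restrict_apply {m : ℤ} {μ : ℝ} {f : E4 → ℂ} (hf : IsEigenSection m μ f)
    (x : sphere (0 : E4) 1) : (hf.restrict : C(sphere (0 : E4) 1, ℂ)) x = f x :=
  rfl

theorem isHopfMoment_of_mem_eigenSubmodule {m : ℤ} {μ : ℝ} {F : C(sphere (0 : E4) 1, ℂ)}
    (hF : F ∈ eigenSubmodule m μ) :
    IsHopfMoment m (4 * μ + m ^ 2) (sphereMoment volume hopfCoord F) := by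
  obtain ⟨f, hE, hfF⟩ := hF
  obtain rfl : hE.isSmoothOnSphere.restrict = F := ContinuousMap.ext hfF
  exact hE.isHopfMoment_sphereMoment

theorem eq_zero_of_sphereMoment_hopfCoord_eq_zero {F : C(sphere (0 : E4) 1, ℂ)}
    (hF : sphereMoment volume hopfCoord F = 0) : F = 0 :=
  eq_zero_of_sphereMoment_eq_zero volume hopfCoord (fun _ _ => ext_hopfCoord) star_hopfCoord hF

/-- The eigenvalue `(l(l + 2) - m²)/4` of `∇_A^*∇_A` on `H^m`. -/
def hopfEigenvalue (m : ℤ) (l : ℕ) : ℝ := (l * (l + 2) - m ^ 2) / 4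

theorem eigenSubmodule_eq_bot {m : ℤ} {μ : ℝ}
    (hμ : ∀ j : ℕ, μ ≠ hopfEigenvalue m (m.natAbs + 2 * j)) : eigenSubmodule m μ = ⊥ := by
  refine (Submodule.eq_bot_iff _).mpr fun F hF => eq_zero_of_sphereMoment_hopfCoord_eq_zero
    ((isHopfMoment_of_mem_eigenSubmodule hF).eq_zero_of_forall_ne fun j hj => hμ j ?_)
  have hj' : 4 * μ + (m : ℝ) ^ 2
      = (m.natAbs + 2 * j : ℕ) * ((m.natAbs + 2 * j : ℕ) + 2) := by exact_mod_cast hj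
  rw [hopfEigenvalue]
  linarith

theorem IsEigenSection.eq_zero_of_forall_ne {m : ℤ} {μ : ℝ} {f : E4 → ℂ}
    (hf : IsEigenSection m μ f) (hμ : ∀ j : ℕ, μ ≠ hopfEigenvalue m (m.natAbs + 2 * j))
    {x : E4} (hx : ‖x‖ = 1) : f x = 0 := by
  have h0 : hf.restrict = 0 :=
    Subtype.ext ((Submodule.eq_bot_iff _).mp (eigenSubmodule_eq_bot hμ) _ hf.restrict.2)
  rw [← hf.restrict_apply ⟨x, mem_sphere_zero_iff_norm.mpr hx⟩, h0]
  rfl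

/-- The moments of an eigensection against the monomials `normalMonomial A B k`. -/
def normalMoments (A B : ℕ) (m : ℤ) (μ : ℝ) : eigenSubmodule m μ →ₗ[ℂ] Fin (A + B + 1) → ℂ :=
  LinearMap.pi fun k =>
    (sphereMoment volume hopfCoord).flip (normalMonomial A B k) ∘ₗ (eigenSubmodule m μ).subtype

theorem injective_normalMoments (A B : ℕ) :
    Function.Injective (normalMoments A B (A - B) (hopfEigenvalue (A - B) (A + B))) := by
  refine (injective_iff_map_eq_zero _).mpr fun F hF =>
    Subtype.ext (eq_zero_of_sphereMoment_hopfCoord_eq_zero ?_)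
  refine IsHopfMoment.eq_zero_of_normalMonomial (A := A) (B := B) ?_ fun k => congrFun hF k
  convert isHopfMoment_of_mem_eigenSubmodule F.2
  simp only [hopfEigenvalue]
  push_cast
  ring

end Moments

section HarmonicSections

theorem linearIndependent_X_add_C_pow {K : Type*} [Field K] [CharZero K] {n : ℕ}
    {t : Fin (n + 1) → K} (ht : Function.Injective t) :
    LinearIndependent K fun i => (Polynomial.X + Polynomial.C (t i)) ^ n := by
  refine Fintype.linearIndependent_iff.mpr fun c hc =>
    congrFun (Matrix.eq_zero_of_forall_pow_sum_mul_pow_eq_zero ht fun i => ?_)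
  have hcoeff := congrArg (Polynomial.coeff · (n - i)) hc
  simp only [Polynomial.finsetSum_coeff, Polynomial.coeff_smul, Polynomial.coeff_X_add_C_pow,
    Polynomial.coeff_zero, smul_eq_mul, ← mul_assoc, ← Finset.sum_mul,
    show n - (n - (i : ℕ)) = i by omega] at hcoeff
  refine (mul_eq_zero.mp hcoeff).resolve_right ?_
  exact_mod_cast (Nat.choose_pos (Nat.sub_le n i)).ne'

/-- The harmonic polynomial `(z₁ + t z̄₂)ᴬ (z₂ - t z̄₁)ᴮ`. -/
def harmonicPoly (A B : ℕ) (t : ℂ) : MvPolynomial (Fin 4) ℂ :=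
  (X 0 + C t * X 3) ^ A * (X 2 - C t * X 1) ^ B

theorem isHomogeneous_harmonicPoly (A B : ℕ) (t : ℂ) :
    (harmonicPoly A B t).IsHomogeneous (A + B) := by
  have hX (k : Fin 4) : (X k : MvPolynomial (Fin 4) ℂ).IsHomogeneous 1 := isHomogeneous_X ℂ k
  have hCX (k : Fin 4) : (C t * X k : MvPolynomial (Fin 4) ℂ).IsHomogeneous 1 := (hX k).C_mul t
  simpa [harmonicPoly] using (((hX 0).add (hCX 3)).pow A).mul (((hX 2).sub (hCX 1)).pow B)

theorem isWeightedHomogeneous_harmonicPoly (A B : ℕ) (t : ℂ) :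
    (harmonicPoly A B t).IsWeightedHomogeneous hopfWeight (A - B : ℤ) := by
  have hX (k : Fin 4) := isWeightedHomogeneous_X ℂ hopfWeight k
  have hCX (k : Fin 4) := (isWeightedHomogeneous_C hopfWeight t).mul (hX k)
  simp only [zero_add] at hCX
  convert (((hX 0).add (hCX 3)).pow A).mul (((hX 2).sub (hCX 1)).pow B) using 1
  · rfl
  · simp only [hopfWeight, Matrix.cons_val, nsmul_eq_mul]
    ring

theorem complexLaplacian_harmonicPoly (A B : ℕ) (t : ℂ) :
    complexLaplacian (harmonicPoly A B t) = 0 := by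
  set u : MvPolynomial (Fin 4) ℂ := X 0 + C t * X 3 with hu
  set v : MvPolynomial (Fin 4) ℂ := X 2 - C t * X 1 with hv
  have hu0 : pderiv 0 u = 1 := by simp [u, pderiv_X]
  have hu1 : pderiv 1 u = 0 := by simp [u, pderiv_X]
  have hu2 : pderiv 2 u = 0 := by simp [u, pderiv_X]
  have hu3 : pderiv 3 u = C t := by simp [u, pderiv_X]
  have hv0 : pderiv 0 v = 0 := by simp [v, pderiv_X]
  have hv1 : pderiv 1 v = -C t := by simp [v, pderiv_X]
  have hv2 : pderiv 2 v = 1 := by simp [v, pderiv_X]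
  have hv3 : pderiv 3 v = 0 := by simp [v, pderiv_X]
  rw [harmonicPoly, ← hu, ← hv, complexLaplacian_apply]
  simp only [Derivation.leibniz, Derivation.leibniz_pow, map_neg, hu0, hu1, hu2, hu3, hv0,
    hv1, hv2, hv3, pderiv_C, smul_eq_mul, nsmul_eq_mul, Derivation.map_natCast, smul_eq_C_mul,
    mul_zero, add_zero, zero_add]
  ring

theorem linearIndependent_harmonicPoly (A B : ℕ) :
    LinearIndependent ℂ fun i : Fin (A + B + 1) => harmonicPoly A B i := by
  have hspec (t : ℂ) : aeval ![Polynomial.X, -1, Polynomial.X, 1] (harmonicPoly A B t)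
      = (Polynomial.X + Polynomial.C t) ^ (A + B) := by
    simp [harmonicPoly, pow_add]
  refine .of_comp
    (aeval (![Polynomial.X, -1, Polynomial.X, 1] : Fin 4 → Polynomial ℂ)).toLinearMap ?_
  simp only [Function.comp_def, AlgHom.toLinearMap_apply, hspec]
  exact linearIndependent_X_add_C_pow fun i j h => Fin.ext (by exact_mod_cast h)

theorem linearIndependent_polyFun_sphere {E κ ι : Type*} [Finite κ]
    [NormedAddCommGroup E] [NormedSpace ℝ E] [Nontrivial E] {ℓ : κ → E →L[ℝ] ℂ}
    (hℓ : LinearIndependent ℂ ℓ) {d : ℕ} {P : ι → MvPolynomial κ ℂ}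
    (hhom : ∀ i, (P i).IsHomogeneous d) (hP : LinearIndependent ℂ P) :
    LinearIndependent ℂ fun i (x : sphere (0 : E) 1) => polyFun ℓ (P i) x := by
  refine linearIndependent_iff'.mpr fun s c hc => linearIndependent_iff'.mp hP s c ?_
  have hq : (∑ i ∈ s, c i • P i).IsHomogeneous d := by
    refine IsHomogeneous.sum _ _ _ fun i _ => ?_
    rw [smul_eq_C_mul]
    exact (hhom i).C_mul _
  have hsphere (x : E) (hx : ‖x‖ = 1) : polyFun ℓ (∑ i ∈ s, c i • P i) x = 0 := by
    simpa using congrFun hc ⟨x, mem_sphere_zero_iff_norm.mpr hx⟩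
  refine eq_zero_of_polyFun_eq_zero ℓ hℓ hq (funext fun x => ?_)
  obtain ⟨e, he, hxe⟩ : ∃ e : E, ‖e‖ = 1 ∧ x = ‖x‖ • e := by
    rcases eq_or_ne x 0 with rfl | hx
    · simpa using exists_norm_eq E zero_le_one
    · exact ⟨‖x‖⁻¹ • x, by simp [norm_smul, hx], by simp [hx]⟩
  rw [hxe, polyFun_smul ℓ hq, hsphere e he, smul_zero, Pi.zero_apply]

/-- The eigensection of `H^{A - B}` given by `harmonicPoly A B t`. -/
def harmonicSection (A B : ℕ) (t : ℂ) (x : E4) : ℂ :=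
  polyFun hopfCoord (harmonicPoly A B t) (‖x‖⁻¹ • x)

theorem isEigenSection_polyFun_normalize {p : MvPolynomial (Fin 4) ℂ} {l : ℕ} {m : ℤ}
    (hp : p.IsHomogeneous l) (hw : p.IsWeightedHomogeneous hopfWeight m)
    (hΔ : complexLaplacian p = 0) :
    IsEigenSection m (hopfEigenvalue m l) fun x => polyFun hopfCoord p (‖x‖⁻¹ • x) := by
  refine isEigenSection_iff.mpr ⟨isSmoothOnSphere_polyFun_normalize hopfCoord p, fun s x => ?_,
    fun x hx => ?_⟩
  · have hx : ‖hopfAct s x‖⁻¹ • hopfAct s x = hopfAct s (‖x‖⁻¹ • x) := by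
      simp [← hopfIsometry_apply]
    rw [hx, polyFun_comp hopfCoord hw (Complex.exp_ne_zero (Complex.I * s)) (hopfCoord_hopfAct s),
      ← Complex.exp_int_mul]
    ring_nf
  · rw [laplacian_polyFun_normalize hopfCoord hp hx, laplacian_polyFun_hopfCoord, hΔ, map_zero]
    simp only [hopfEigenvalue, finrank_euclideanSpace_fin, Complex.real_smul, hx, inv_one, one_smul,
      Pi.zero_apply]
    push_cast
    ring

theorem isEigenSection_harmonicSection (A B : ℕ) (t : ℂ) :
    IsEigenSection (A - B) (hopfEigenvalue (A - B) (A + B)) (harmonicSection A B t) :=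
  isEigenSection_polyFun_normalize (isHomogeneous_harmonicPoly A B t)
    (isWeightedHomogeneous_harmonicPoly A B t) (complexLaplacian_harmonicPoly A B t)

theorem linearIndependent_harmonicSection (A B : ℕ) :
    LinearIndependent ℂ fun (i : Fin (A + B + 1)) (x : sphere (0 : E4) 1) =>
      harmonicSection A B i x := by
  simpa [harmonicSection] using linearIndependent_polyFun_sphere linearIndependent_hopfCoord
    (fun i : Fin (A + B + 1) => isHomogeneous_harmonicPoly A B i)
    (linearIndependent_harmonicPoly A B)

theorem linearIndependent_restrict_harmonicSection (A B : ℕ) :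
    LinearIndependent ℂ fun i : Fin (A + B + 1) =>
      (isEigenSection_harmonicSection A B i).restrict :=
  .of_comp (ContinuousMap.coeFnLinearMap ℂ ∘ₗ Submodule.subtype _)
    (linearIndependent_harmonicSection A B)

theorem finrank_eigenSubmodule (A B : ℕ) :
    finrank ℂ (eigenSubmodule (A - B) (hopfEigenvalue (A - B) (A + B))) = A + B + 1 := by
  have hinj := injective_normalMoments A B
  have : Module.Finite ℂ (eigenSubmodule (A - B) (hopfEigenvalue (A - B) (A + B))) :=
    .of_injective _ hinj
  have hle := LinearMap.finrank_le_finrank_of_injective hinj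
  have hge := (linearIndependent_restrict_harmonicSection A B).fintype_card_le_finrank
  rw [Module.finrank_fin_fun] at hle
  rw [Fintype.card_fin] at hge
  exact le_antisymm hle hge

theorem span_restrict_harmonicSection (A B : ℕ) :
    Submodule.span ℂ (range fun i : Fin (A + B + 1) =>
      (isEigenSection_harmonicSection A B i).restrict) = ⊤ :=
  LinearIndependent.span_eq_top_of_card_eq_finrank
    (V := eigenSubmodule (A - B) (hopfEigenvalue (A - B) (A + B)))
    (linearIndependent_restrict_harmonicSection A B)
    (by rw [Fintype.card_fin, finrank_eigenSubmodule])

theorem exists_harmonicSection_ne_zero (A B : ℕ) :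
    ∃ x : E4, ‖x‖ = 1 ∧ harmonicSection A B 0 x ≠ 0 := by
  obtain ⟨x, hx⟩ := Function.ne_iff.mp ((linearIndependent_harmonicSection A B).ne_zero 0)
  exact ⟨x, norm_eq_of_mem_sphere x, by simpa using hx⟩

theorem exists_eq_sum_harmonicSection {A B : ℕ} {f : E4 → ℂ}
    (hf : IsEigenSection (A - B) (hopfEigenvalue (A - B) (A + B)) f) :
    ∃ c : Fin (A + B + 1) → ℂ, ∀ x : E4, ‖x‖ = 1 →
      f x = ∑ i, c i * harmonicSection A B i x := by
  have hmem : hf.restrict ∈ Submodule.span ℂ _ :=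
    (span_restrict_harmonicSection A B).symm ▸ Submodule.mem_top
  obtain ⟨c, hc⟩ := (Submodule.mem_span_range_iff_exists_fun ℂ).mp hmem
  refine ⟨c, fun x hx => ?_⟩
  rw [← hf.restrict_apply ⟨x, mem_sphere_zero_iff_norm.mpr hx⟩, ← hc]
  simp [IsEigenSection.restrict_apply]

theorem exists_add_eq_and_sub_eq (m : ℤ) (j : ℕ) :
    ∃ A B : ℕ, m.natAbs + 2 * j = A + B ∧ A - B = m :=
  ⟨((m.natAbs + 2 * j + m) / 2).toNat, ((m.natAbs + 2 * j - m) / 2).toNat, by omega, by omega⟩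

end HarmonicSections

end

/-- The eigenvalues of the Laplacian `∇_A^*∇_A` of the SO(3)-invariant
connection `m A₀` on `H^m → S²` are `(l(l+2) − m²)/4`, `l = |m| + 2j`, `j = 0, 1, 2, …`,
each with multiplicity `l + 1`. -/
theorem eigenvalues_laplacian_hopf_bundle (m : ℤ) :
    (∀ μ : ℝ,
      (∃ f, IsEigenSection m μ f ∧ ∃ x : E4, ‖x‖ = 1 ∧ f x ≠ 0) ↔
      (∃ j : ℕ, μ = (((m.natAbs + 2 * j : ℕ) : ℝ) * (((m.natAbs + 2 * j : ℕ) : ℝ) + 2)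
          - (m : ℝ) ^ 2) / 4)) ∧
    (∀ j : ℕ,
      ∃ b : Fin (m.natAbs + 2 * j + 1) → E4 → ℂ,
        (∀ i, IsEigenSection m
          ((((m.natAbs + 2 * j : ℕ) : ℝ) * (((m.natAbs + 2 * j : ℕ) : ℝ) + 2)
            - (m : ℝ) ^ 2) / 4) (b i)) ∧
        LinearIndependent ℂ (fun i => fun x : Metric.sphere (0 : E4) 1 => b i (x : E4)) ∧
        (∀ f, IsEigenSection m
            ((((m.natAbs + 2 * j : ℕ) : ℝ) * (((m.natAbs + 2 * j : ℕ) : ℝ) + 2)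
              - (m : ℝ) ^ 2) / 4) f →
          ∃ c : Fin (m.natAbs + 2 * j + 1) → ℂ,
            ∀ x : E4, ‖x‖ = 1 → f x = ∑ i, c i * b i x)) := by
  refine ⟨fun μ => ⟨fun ⟨f, hf, x, hx, hfx⟩ => ?_, ?_⟩, fun j => ?_⟩
  · by_contra! hμ
    exact hfx (hf.eq_zero_of_forall_ne hμ hx)
  · rintro ⟨j, rfl⟩
    obtain ⟨A, B, hl, rfl⟩ := exists_add_eq_and_sub_eq m j
    simp only [hl]
    exact ⟨_, isEigenSection_harmonicSection A B 0, exists_harmonicSection_ne_zero A B⟩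
  · obtain ⟨A, B, hl, rfl⟩ := exists_add_eq_and_sub_eq m j
    rw [hl]
    exact ⟨fun i => harmonicSection A B i, fun i => isEigenSection_harmonicSection A B i,
      linearIndependent_harmonicSection A B, fun f hf => exists_eq_sum_harmonicSection hf⟩

end
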